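/- arXiv:1203.3619 — 9 statements merged into one kernel-verified Lean document; each statement's English description precedes it below -/
import Mathlib

section
/- In Stage One of SHALE, the dual values α are pointwise nondecreasing and bounded: for all iterations t and all contracts j, 0 ≤ α^t_j ≤ α^{t+1}_j ≤ p_j; consequently, for every j the sequence (α^t_j)_{t≥0} converges as t → ∞. -/
open Finset Filter Topology

noncomputable section

variable {I J : Type*} [Fintype I] [Fintype J]

open Classical in
/-- Γ(j): the impressions eligible for contract `j`. -/
def GammaD (adj : I → J → Prop) (j : J) : Finset I :=
  Finset.univ.filter (fun i => adj i j)

open Classical in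
/-- Γ(i): the contracts eligible for impression `i`. -/
def GammaS (adj : I → J → Prop) (i : I) : Finset J :=
  Finset.univ.filter (fun j => adj i j)

/-- Total eligible supply `S_j = ∑_{i ∈ Γ(j)} s_i`. -/
def Stot (adj : I → J → Prop) (s : I → ℝ) (j : J) : ℝ :=
  ∑ i ∈ GammaD adj j, s i

/-- Target `θ_{ij} = d_j / S_j` (independent of `i`). -/
def theta (adj : I → J → Prop) (s : I → ℝ) (d : J → ℝ) (j : J) : ℝ :=
  d j / Stot adj s j

/-- `g_{ij}(z) = max {0, θ_{ij} (1 + z / V_j)}` (independent of `i`). -/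
def gfun (adj : I → J → Prop) (s : I → ℝ) (d V : J → ℝ) (j : J) (z : ℝ) : ℝ :=
  max 0 ((theta adj s d j) * (1 + z / V j))

/-- `b` is a valid supply dual `β_i` for demand duals `α`: `b ≥ 0` and either `b = 0` with
`∑_{j ∈ Γ(i)} g_{ij}(α_j) ≤ 1`, or `∑_{j ∈ Γ(i)} g_{ij}(α_j − b) = 1`. -/
def BetaSpec (adj : I → J → Prop) (s : I → ℝ) (d V : J → ℝ)
    (α : J → ℝ) (i : I) (b : ℝ) : Prop :=
  0 ≤ b ∧ ((b = 0 ∧ ∑ j ∈ GammaS adj i, gfun adj s d V j (α j) ≤ 1) ∨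
    ∑ j ∈ GammaS adj i, gfun adj s d V j (α j - b) = 1)

/-- Stage One of SHALE: `α⁰ = 0`; `β^t_i` is a valid supply dual for `α^t`; and
`α^{t+1}_j = min (p_j) a_j` where `a_j` solves `∑_{i ∈ Γ(j)} s_i g_{ij}(a_j − β^t_i) = d_j`. -/
def StageOne (adj : I → J → Prop) (s : I → ℝ) (d p V : J → ℝ)
    (α : ℕ → J → ℝ) (β : ℕ → I → ℝ) : Prop :=
  (∀ j, α 0 j = 0) ∧
  (∀ t i, BetaSpec adj s d V (α t) i (β t i)) ∧
  (∀ t j, ∃ a : ℝ,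
    (∑ i ∈ GammaD adj j, s i * gfun adj s d V j (a - β t i) = d j) ∧
    α (t + 1) j = min (p j) a)

/-- Projected delivery `d_j(α) = ∑_{i ∈ Γ(j)} s_i g_{ij}(α_j − β_i)`. -/
def Dproj (adj : I → J → Prop) (s : I → ℝ) (d V : J → ℝ)
    (α : J → ℝ) (β : I → ℝ) (j : J) : ℝ :=
  ∑ i ∈ GammaD adj j, s i * gfun adj s d V j (α j - β i)

/-- The objective of the allocation problem. -/
def Fobj (adj : I → J → Prop) (s : I → ℝ) (d p V : J → ℝ)
    (x : I → J → ℝ) (u : J → ℝ) : ℝ :=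
  (1 / 2) * ∑ j, ∑ i ∈ GammaD adj j,
      s i * (V j / theta adj s d j) * (x i j - theta adj s d j) ^ 2
    + ∑ j, p j * u j

/-- Feasibility for the allocation problem. -/
def Feasible (adj : I → J → Prop) (s : I → ℝ) (d : J → ℝ)
    (x : I → J → ℝ) (u : J → ℝ) : Prop :=
  (∀ j, d j ≤ ∑ i ∈ GammaD adj j, s i * x i j + u j) ∧
  (∀ i, ∑ j ∈ GammaS adj i, x i j ≤ 1) ∧
  (∀ i j, adj i j → 0 ≤ x i j) ∧
  (∀ j, 0 ≤ u j)

/-- The KKT conditions for duals `(α, β)`. -/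
def KKT (adj : I → J → Prop) (s : I → ℝ) (d p V : J → ℝ)
    (α : J → ℝ) (β : I → ℝ) : Prop :=
  (∀ j, 0 ≤ α j ∧ α j ≤ p j) ∧
  (∀ i, 0 ≤ β i ∧ (∑ j ∈ GammaS adj i, gfun adj s d V j (α j - β i) ≤ 1) ∧
    (0 < β i → ∑ j ∈ GammaS adj i, gfun adj s d V j (α j - β i) = 1)) ∧
  (∀ j, (∑ i ∈ GammaD adj j, s i * gfun adj s d V j (α j - β i) ≤ d j) ∧
    (α j < p j → ∑ i ∈ GammaD adj j, s i * gfun adj s d V j (α j - β i) = d j))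


lemma gfun_lt (adj : I → J → Prop) (s : I → ℝ) (d V : J → ℝ) (j : J)
    (hd : 0 < d j) (hV : 0 < V j) (hS : 0 < Stot adj s j) {z w : ℝ} (h : z < w)
    (hw : 0 < gfun adj s d V j w) : gfun adj s d V j z < gfun adj s d V j w := by
  have ht : 0 < theta adj s d j := div_pos hd hS
  have h1 : theta adj s d j * (1 + z / V j) < theta adj s d j * (1 + w / V j) := by
    gcongr
  refine max_lt hw ?_
  exact lt_of_lt_of_le h1 (le_max_right _ _)

lemma gfun_mono (adj : I → J → Prop) (s : I → ℝ) (d V : J → ℝ) (j : J)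
    (hd : 0 < d j) (hV : 0 < V j) (hS : 0 < Stot adj s j) {z w : ℝ} (h : z ≤ w) :
    gfun adj s d V j z ≤ gfun adj s d V j w := by
  have ht : 0 < theta adj s d j := div_pos hd hS
  unfold gfun
  gcongr

/-- A positive sum strictly dominates another if each positive term is strictly larger. -/
lemma sum_strict {ι : Type*} (A : Finset ι) (f g : ι → ℝ)
    (hlt : ∀ i ∈ A, 0 < g i → f i < g i)
    (hle : ∀ i ∈ A, f i ≤ g i) (hpos : 0 < ∑ i ∈ A, g i) :
    ∑ i ∈ A, f i < ∑ i ∈ A, g i := by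
  obtain ⟨i, hi, hgi⟩ : ∃ i ∈ A, 0 < g i := by
    by_contra! hcon
    exact absurd (Finset.sum_nonpos hcon) (not_le.mpr hpos)
  exact Finset.sum_lt_sum hle ⟨i, hi, hlt i hi hgi⟩

lemma demand_mono (adj : I → J → Prop) (s : I → ℝ) (d V : J → ℝ) (j : J)
    (hs : ∀ i, 0 < s i) (hd : 0 < d j) (hV : 0 < V j) (hS : 0 < Stot adj s j)
    (b b' : I → ℝ) (hb : ∀ i, b i ≤ b' i) (a a' : ℝ)
    (h : ∑ i ∈ GammaD adj j, s i * gfun adj s d V j (a - b i) = d j)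
    (h' : ∑ i ∈ GammaD adj j, s i * gfun adj s d V j (a' - b' i) = d j) : a ≤ a' := by
  by_contra! hlt
  have hl : ∀ i, a' - b' i < a - b i := fun i => by linarith [hb i]
  have := sum_strict (GammaD adj j) (fun i => s i * gfun adj s d V j (a' - b' i))
    (fun i => s i * gfun adj s d V j (a - b i))
    (fun i _ hi => mul_lt_mul_of_pos_left
      (gfun_lt adj s d V j hd hV hS (hl i) (pos_of_mul_pos_right hi (hs i).le)) (hs i))
    (fun i _ => mul_le_mul_of_nonneg_left (gfun_mono adj s d V j hd hV hS (hl i).le) (hs i).le)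
    (by rw [h]; exact hd)
  linarith

lemma supply_mono (adj : I → J → Prop) (s : I → ℝ) (d V : J → ℝ) (i : I)
    (hd : ∀ j, 0 < d j) (hV : ∀ j, 0 < V j) (hS : ∀ j, 0 < Stot adj s j)
    (a a' : J → ℝ) (ha : ∀ j, a j ≤ a' j) (b b' : ℝ)
    (h : BetaSpec adj s d V a i b) (h' : BetaSpec adj s d V a' i b') : b ≤ b' := by
  by_contra! hlt
  have hl : ∀ j, a j - b < a' j - b' := fun j => by linarith [ha j]
  have e1 : ∑ j ∈ GammaS adj i, gfun adj s d V j (a j - b) = 1 := by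
    rcases h.2 with ⟨h0, _⟩ | h1
    · linarith [h'.1]
    · exact h1
  have e2 : ∑ j ∈ GammaS adj i, gfun adj s d V j (a' j - b') ≤ 1 := by
    rcases h'.2 with ⟨h0, h1⟩ | h1
    · simpa [h0] using h1
    · exact h1.le
  have hle : ∀ j ∈ GammaS adj i,
      gfun adj s d V j (a j - b) ≤ gfun adj s d V j (a' j - b') :=
    fun j _ => gfun_mono adj s d V j (hd j) (hV j) (hS j) (hl j).le
  have := sum_strict (GammaS adj i) (fun j => gfun adj s d V j (a j - b))
    (fun j => gfun adj s d V j (a' j - b'))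
    (fun j _ hj => gfun_lt adj s d V j (hd j) (hV j) (hS j) (hl j) hj)
    hle (lt_of_lt_of_le (by rw [e1]; exact one_pos) (Finset.sum_le_sum hle))
  linarith

theorem shale_alpha_monotone_bounded_converges
    (adj : I → J → Prop) (s : I → ℝ) (d p V : J → ℝ)
    (hs : ∀ i, 0 < s i) (hd : ∀ j, 0 < d j) (hp : ∀ j, 0 < p j) (hV : ∀ j, 0 < V j)
    (hS : ∀ j, 0 < Stot adj s j)
    (α : ℕ → J → ℝ) (β : ℕ → I → ℝ) (hstage : StageOne adj s d p V α β) :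
    (∀ t j, 0 ≤ α t j ∧ α t j ≤ α (t + 1) j ∧ α (t + 1) j ≤ p j) ∧
    (∀ j, ∃ L : ℝ, Filter.Tendsto (fun t => α t j) Filter.atTop (𝓝 L)) := by
  obtain ⟨h0, hβ, hα⟩ := hstage
  have hmono : ∀ t j, α t j ≤ α (t + 1) j := by
    intro t
    induction t with
    | zero =>
      intro j
      obtain ⟨a, ha, e⟩ := hα 0 j
      rw [e, h0 j]
      refine le_min (hp j).le ?_
      refine demand_mono adj s d V j hs (hd j) (hV j) (hS j) (fun _ => 0) (β 0)
        (fun i => (hβ 0 i).1) 0 a ?_ ha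
      have hSj := hS j
      have ht : 0 < theta adj s d j := div_pos (hd j) hSj
      have hg : gfun adj s d V j 0 = theta adj s d j := by
        simp [gfun, ht.le]
      simp only [sub_zero, hg]
      rw [← Finset.sum_mul]
      change Stot adj s j * (d j / Stot adj s j) = d j
      field_simp
    | succ t ih =>
      intro j
      obtain ⟨a, ha, e⟩ := hα t j
      obtain ⟨a', ha', e'⟩ := hα (t + 1) j
      rw [e, e']
      refine min_le_min le_rfl ?_
      exact demand_mono adj s d V j hs (hd j) (hV j) (hS j) (β t) (β (t + 1))
        (fun i => supply_mono adj s d V i hd hV hS (α t) (α (t + 1)) ih _ _ (hβ t i)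
          (hβ (t + 1) i)) a a' ha ha'
  have hle : ∀ t j, α (t + 1) j ≤ p j := by
    intro t j
    obtain ⟨a, _, e⟩ := hα t j
    rw [e]
    exact min_le_left _ _
  have hm : ∀ j, Monotone (fun t => α t j) := fun j => monotone_nat_of_le_succ (fun t => hmono t j)
  refine ⟨fun t j => ⟨?_, hmono t j, hle t j⟩, fun j => ⟨_, tendsto_atTop_ciSup (hm j) ⟨p j, ?_⟩⟩⟩
  · have := hm j (Nat.zero_le t)
    simpa [h0 j] using this
  · rintro _ ⟨t, rfl⟩
    exact (hmono t j).trans (hle t j)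

end
end

section
/- In Stage One of SHALE, the supply duals are pointwise nondecreasing across iterations: for all iterations t and all impressions i, β^t_i ≤ β^{t+1}_i. -/
open Finset Filter Topology

noncomputable section

variable {I J : Type*} [Fintype I] [Fintype J]

theorem gfun_mono_aux (adj : I → J → Prop) (s : I → ℝ) (d V : J → ℝ)
    (hd : ∀ j, 0 < d j) (hV : ∀ j, 0 < V j) (hS : ∀ j, 0 < Stot adj s j)
    (j : J) (z z' : ℝ) (h : z < z') :
    gfun adj s d V j z ≤ gfun adj s d V j z' ∧
      (0 < gfun adj s d V j z → gfun adj s d V j z < gfun adj s d V j z') := by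
  have hθ : 0 < theta adj s d j := div_pos (hd j) (hS j)
  have h1 : z / V j < z' / V j := div_lt_div_of_pos_right h (hV j)
  have h2 : theta adj s d j * (1 + z / V j) < theta adj s d j * (1 + z' / V j) :=
    mul_lt_mul_of_pos_left (by linarith) hθ
  unfold gfun
  refine ⟨max_le_max le_rfl h2.le, fun h3 => ?_⟩
  have h4 : 0 < theta adj s d j * (1 + z / V j) := by
    rcases lt_max_iff.1 h3 with h | h
    · exact absurd h (lt_irrefl _)
    · exact h
  rw [max_eq_right h4.le, max_eq_right (h4.trans h2).le]
  exact h2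

theorem sum_lt_aux {K : Type*} (A : Finset K) (w f g : K → ℝ) (hw : ∀ x, 0 < w x)
    (hfg : ∀ x, f x ≤ g x ∧ (0 < f x → f x < g x)) (hpos : 0 < ∑ x ∈ A, w x * f x) :
    ∑ x ∈ A, w x * f x < ∑ x ∈ A, w x * g x := by
  obtain ⟨x, hx, hx'⟩ := Finset.exists_lt_of_sum_lt (s := A) (f := fun _ => (0 : ℝ))
    (g := fun x => w x * f x) (by simpa using hpos)
  refine Finset.sum_lt_sum (fun y _ => mul_le_mul_of_nonneg_left (hfg y).1 (hw y).le)
    ⟨x, hx, mul_lt_mul_of_pos_left ((hfg x).2 ?_) (hw x)⟩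
  exact (mul_pos_iff_of_pos_left (hw x)).1 hx'

theorem beta_mono_aux (adj : I → J → Prop) (s : I → ℝ) (d V : J → ℝ)
    (hd : ∀ j, 0 < d j) (hV : ∀ j, 0 < V j) (hS : ∀ j, 0 < Stot adj s j)
    (α α' : J → ℝ) (i : I) (b b' : ℝ) (hα : ∀ j, α j ≤ α' j)
    (h : BetaSpec adj s d V α i b) (h' : BetaSpec adj s d V α' i b') : b ≤ b' := by
  by_contra! hlt
  obtain ⟨h0, h1⟩ := h
  obtain ⟨h0', h1'⟩ := h'
  have e : ∑ j ∈ GammaS adj i, gfun adj s d V j (α j - b) = 1 := by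
    rcases h1 with h1 | h1
    · linarith [h1.1]
    · exact h1
  have e' : ∑ j ∈ GammaS adj i, gfun adj s d V j (α' j - b') ≤ 1 := by
    rcases h1' with ⟨hb, h2⟩ | h1
    · subst hb
      simpa using h2
    · exact h1.le
  have := sum_lt_aux (GammaS adj i) (fun _ => 1) (fun j => gfun adj s d V j (α j - b))
    (fun j => gfun adj s d V j (α' j - b')) (fun _ => one_pos)
    (fun j => gfun_mono_aux adj s d V hd hV hS j _ _ (by linarith [hα j]))
    (by simp [e])
  simp only [one_mul] at this
  linarith

theorem alpha_mono_aux (adj : I → J → Prop) (s : I → ℝ) (d V : J → ℝ)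
    (hs : ∀ i, 0 < s i)
    (hd : ∀ j, 0 < d j) (hV : ∀ j, 0 < V j) (hS : ∀ j, 0 < Stot adj s j)
    (β β' : I → ℝ) (j : J) (a a' : ℝ) (hβ : ∀ i, β i ≤ β' i)
    (h : ∑ i ∈ GammaD adj j, s i * gfun adj s d V j (a - β i) = d j)
    (h' : ∑ i ∈ GammaD adj j, s i * gfun adj s d V j (a' - β' i) = d j) : a ≤ a' := by
  by_contra! hlt
  have := sum_lt_aux (GammaD adj j) s (fun i => gfun adj s d V j (a' - β' i))
    (fun i => gfun adj s d V j (a - β i)) hs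
    (fun i => gfun_mono_aux adj s d V hd hV hS j _ _ (by linarith [hβ i]))
    (by rw [h']; exact hd j)
  simp only [h, h'] at this
  exact lt_irrefl _ this

theorem shale_beta_monotone
    (adj : I → J → Prop) (s : I → ℝ) (d p V : J → ℝ)
    (hs : ∀ i, 0 < s i) (hd : ∀ j, 0 < d j) (hp : ∀ j, 0 < p j) (hV : ∀ j, 0 < V j)
    (hS : ∀ j, 0 < Stot adj s j)
    (α : ℕ → J → ℝ) (β : ℕ → I → ℝ) (hstage : StageOne adj s d p V α β) :
    ∀ t i, β t i ≤ β (t + 1) i := by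
  obtain ⟨hα0, hβ, hα⟩ := hstage
  have key : ∀ t j, α t j ≤ α (t + 1) j := by
    intro t
    induction t with
    | zero =>
      intro j
      obtain ⟨a, ha, he⟩ := hα 0 j
      rw [hα0, he]
      refine le_min (hp j).le ?_
      refine alpha_mono_aux adj s d V hs hd hV hS (fun _ => 0) (β 0) j 0 a
        (fun i => (hβ 0 i).1) ?_ ha
      have hθ : 0 < theta adj s d j := div_pos (hd j) (hS j)
      have hg : gfun adj s d V j 0 = theta adj s d j := by
        simp [gfun, hθ.le]
      simp only [sub_zero, hg]
      rw [← Finset.sum_mul]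
      exact mul_div_cancel₀ (d j) (hS j).ne'
    | succ t ih =>
      intro j
      obtain ⟨a, ha, he⟩ := hα t j
      obtain ⟨a', ha', he'⟩ := hα (t + 1) j
      rw [he, he']
      refine min_le_min le_rfl ?_
      exact alpha_mono_aux adj s d V hs hd hV hS (β t) (β (t + 1)) j a a'
        (fun i => beta_mono_aux adj s d V hd hV hS (α t) (α (t + 1)) i _ _ ih (hβ t i)
          (hβ (t + 1) i)) ha ha'
  intro t i
  exact beta_mono_aux adj s d V hd hV hS (α t) (α (t + 1)) i _ _ (key t) (hβ t i) (hβ (t + 1) i)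

end
end

section
/- In Stage One of SHALE, each un-capped dual update grows by at least the relative delivery shortfall times the priority: for every iteration t and every contract j, if α^{t+1}_j ≠ p_j then α^{t+1}_j ≥ α^t_j + V_j·(1 − d_j(α^t)/d_j). -/
open Finset Filter Topology

noncomputable section

variable {I J : Type*} [Fintype I] [Fintype J]

theorem gfun_strict (adj : I → J → Prop) (s : I → ℝ) (d V : J → ℝ)
    (hd : ∀ j, 0 < d j) (hV : ∀ j, 0 < V j) (hS : ∀ j, 0 < Stot adj s j)
    (j : J) (x y : ℝ) (hxy : x < y) :
    gfun adj s d V j x ≤ gfun adj s d V j y ∧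
      (0 < gfun adj s d V j x → gfun adj s d V j x < gfun adj s d V j y) := by
  have hθ : 0 < theta adj s d j := div_pos (hd j) (hS j)
  have h1 : x / V j < y / V j := div_lt_div_of_pos_right hxy (hV j)
  have h2 : theta adj s d j * (1 + x / V j) < theta adj s d j * (1 + y / V j) :=
    mul_lt_mul_of_pos_left (by linarith) hθ
  unfold gfun
  refine ⟨max_le_max le_rfl h2.le, fun h => ?_⟩
  rcases lt_max_iff.1 h with h | h
  · exact absurd h (lt_irrefl _)
  · rw [max_eq_right h.le]
    exact lt_max_of_lt_right h2

theorem gfun_nonneg (adj : I → J → Prop) (s : I → ℝ) (d V : J → ℝ) (j : J) (x : ℝ) :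
    0 ≤ gfun adj s d V j x := le_max_left _ _

theorem gfun_lip (adj : I → J → Prop) (s : I → ℝ) (d V : J → ℝ)
    (hd : ∀ j, 0 < d j) (hV : ∀ j, 0 < V j) (hS : ∀ j, 0 < Stot adj s j)
    (j : J) (x y : ℝ) (hxy : x ≤ y) :
    gfun adj s d V j y ≤ gfun adj s d V j x + theta adj s d j * ((y - x) / V j) := by
  have hθ : 0 < theta adj s d j := div_pos (hd j) (hS j)
  have h1 : 0 ≤ theta adj s d j * ((y - x) / V j) :=
    mul_nonneg hθ.le (div_nonneg (by linarith) (hV j).le)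
  have h2 : theta adj s d j * (1 + y / V j) =
      theta adj s d j * (1 + x / V j) + theta adj s d j * ((y - x) / V j) := by ring
  unfold gfun
  refine max_le (add_nonneg (le_max_left _ _) h1) ?_
  rw [h2]
  exact add_le_add_left (le_max_right _ _) _

theorem sumD_lt (adj : I → J → Prop) (s : I → ℝ) (d V : J → ℝ)
    (hs : ∀ i, 0 < s i)
    (hd : ∀ j, 0 < d j) (hV : ∀ j, 0 < V j) (hS : ∀ j, 0 < Stot adj s j)
    (j : J) (x y : I → ℝ) (hxy : ∀ i, x i < y i)
    (hpos : 0 < ∑ i ∈ GammaD adj j, s i * gfun adj s d V j (x i)) :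
    ∑ i ∈ GammaD adj j, s i * gfun adj s d V j (x i) <
      ∑ i ∈ GammaD adj j, s i * gfun adj s d V j (y i) := by
  obtain ⟨i, hi, hip⟩ := Finset.exists_lt_of_sum_lt
    (f := fun _ => (0 : ℝ)) (by simpa using hpos)
  have hip' : 0 < gfun adj s d V j (x i) := (mul_pos_iff_of_pos_left (hs i)).1 hip
  exact Finset.sum_lt_sum
    (fun i _ => mul_le_mul_of_nonneg_left
      (gfun_strict adj s d V hd hV hS j _ _ (hxy i)).1 (hs i).le)
    ⟨i, hi, mul_lt_mul_of_pos_left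
      ((gfun_strict adj s d V hd hV hS j _ _ (hxy i)).2 hip') (hs i)⟩

theorem sumS_lt (adj : I → J → Prop) (s : I → ℝ) (d V : J → ℝ)
    (hd : ∀ j, 0 < d j) (hV : ∀ j, 0 < V j) (hS : ∀ j, 0 < Stot adj s j)
    (i : I) (x y : J → ℝ) (hxy : ∀ j, x j < y j)
    (hpos : 0 < ∑ j ∈ GammaS adj i, gfun adj s d V j (x j)) :
    ∑ j ∈ GammaS adj i, gfun adj s d V j (x j) <
      ∑ j ∈ GammaS adj i, gfun adj s d V j (y j) := by
  obtain ⟨j, hj, hjp⟩ := Finset.exists_lt_of_sum_lt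
    (f := fun _ => (0 : ℝ)) (by simpa using hpos)
  exact Finset.sum_lt_sum
    (fun j _ => (gfun_strict adj s d V hd hV hS j _ _ (hxy j)).1)
    ⟨j, hj, (gfun_strict adj s d V hd hV hS j _ _ (hxy j)).2 hjp⟩

theorem beta_mono (adj : I → J → Prop) (s : I → ℝ) (d V : J → ℝ)
    (hd : ∀ j, 0 < d j) (hV : ∀ j, 0 < V j) (hS : ∀ j, 0 < Stot adj s j)
    (α α' : J → ℝ) (h : ∀ j, α j ≤ α' j) (i : I) (b b' : ℝ)
    (hb : BetaSpec adj s d V α i b) (hb' : BetaSpec adj s d V α' i b') : b ≤ b' := by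
  by_contra! hlt
  obtain ⟨hb0, hb1⟩ := hb
  obtain ⟨hb0', hb1'⟩ := hb'
  rcases hb1 with ⟨h0, _⟩ | hb1
  · linarith
  have hle : ∑ j ∈ GammaS adj i, gfun adj s d V j (α' j - b') ≤ 1 := by
    rcases hb1' with ⟨h0, h1⟩ | h1
    · simpa [h0] using h1
    · exact h1.le
  have := sumS_lt adj s d V hd hV hS i (fun j => α j - b) (fun j => α' j - b')
    (fun j => by have := h j; show α j - b < α' j - b'; linarith) (by simp only [hb1]; norm_num)
  simp only [hb1] at this
  linarith

theorem sum_theta (adj : I → J → Prop) (s : I → ℝ) (d : J → ℝ)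
    (hS : ∀ j, 0 < Stot adj s j) (j : J) (c : ℝ) :
    ∑ i ∈ GammaD adj j, s i * (theta adj s d j * c) = d j * c := by
  rw [← Finset.sum_mul]
  change Stot adj s j * (d j / Stot adj s j * c) = _
  have := (hS j).ne'
  field_simp

theorem alpha_mono (adj : I → J → Prop) (s : I → ℝ) (d p V : J → ℝ)
    (hs : ∀ i, 0 < s i) (hd : ∀ j, 0 < d j) (hp : ∀ j, 0 < p j) (hV : ∀ j, 0 < V j)
    (hS : ∀ j, 0 < Stot adj s j)
    (α : ℕ → J → ℝ) (β : ℕ → I → ℝ) (hstage : StageOne adj s d p V α β) :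
    ∀ t j, α t j ≤ α (t + 1) j := by
  obtain ⟨h0, hβ, hα⟩ := hstage
  intro t
  induction t with
  | zero =>
    intro j
    obtain ⟨a, ha, hm⟩ := hα 0 j
    rw [h0, hm]
    refine le_min (hp j).le ?_
    by_contra! hlt
    have h1 := sumD_lt adj s d V hs hd hV hS j (fun i => a - β 0 i) (fun _ => 0)
      (fun i => by have := (hβ 0 i).1; show a - β 0 i < 0; linarith)
      (by simp only [ha]; exact hd j)
    have hθ : 0 < theta adj s d j := div_pos (hd j) (hS j)
    have h2 : gfun adj s d V j 0 = theta adj s d j * 1 := by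
      unfold gfun
      simp [hθ.le]
    simp only [ha, h2, sum_theta adj s d hS] at h1
    linarith
  | succ t ih =>
    intro j
    obtain ⟨a, ha, hm⟩ := hα t j
    obtain ⟨a', ha', hm'⟩ := hα (t + 1) j
    rw [hm, hm']
    refine min_le_min le_rfl ?_
    by_contra! hlt
    have h1 := sumD_lt adj s d V hs hd hV hS j
      (fun i => a' - β (t + 1) i) (fun i => a - β t i)
      (fun i => by
        have := beta_mono adj s d V hd hV hS _ _ ih i _ _ (hβ t i) (hβ (t + 1) i)
        show a' - β (t + 1) i < a - β t i
        linarith)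
      (by simp only [ha']; exact hd j)
    simp only [ha, ha'] at h1
    linarith

theorem shale_alpha_update_growth
    (adj : I → J → Prop) (s : I → ℝ) (d p V : J → ℝ)
    (hs : ∀ i, 0 < s i) (hd : ∀ j, 0 < d j) (hp : ∀ j, 0 < p j) (hV : ∀ j, 0 < V j)
    (hS : ∀ j, 0 < Stot adj s j)
    (α : ℕ → J → ℝ) (β : ℕ → I → ℝ) (hstage : StageOne adj s d p V α β) :
    ∀ t j, α (t + 1) j ≠ p j →
      α t j + V j * (1 - Dproj adj s d V (α t) (β t) j / d j) ≤ α (t + 1) j := by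
  intro t j hne
  have hmono := alpha_mono adj s d p V hs hd hp hV hS α β hstage t j
  obtain ⟨h0, hβ, hα⟩ := hstage
  obtain ⟨a, ha, hm⟩ := hα t j
  have hma : α (t + 1) j = a := by
    rcases min_choice (p j) a with h | h
    · exact absurd (hm.trans h) hne
    · exact hm.trans h
  rw [hma] at hmono ⊢
  have key : d j ≤ Dproj adj s d V (α t) (β t) j + d j * ((a - α t j) / V j) := by
    rw [← sum_theta adj s d hS j ((a - α t j) / V j)]
    unfold Dproj
    rw [← Finset.sum_add_distrib]
    conv_lhs => rw [← ha]
    refine Finset.sum_le_sum fun i _ => ?_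
    rw [← mul_add]
    refine mul_le_mul_of_nonneg_left ?_ (hs i).le
    have := gfun_lip adj s d V hd hV hS j (α t j - β t i) (a - β t i) (by linarith)
    simpa using this
  have hdj := hd j
  have hVj := hV j
  have k2 : 1 - Dproj adj s d V (α t) (β t) j / d j ≤ (a - α t j) / V j := by
    rw [sub_le_iff_le_add, ← sub_le_iff_le_add', le_div_iff₀ hdj]
    linarith
  rw [le_div_iff₀ hVj] at k2
  linarith

end
end

section
/- Well-definedness of the supply-dual step: for any α : J → ℝ and any impression i ∈ I, there exists a unique b ≥ 0 such that either b = 0 and Σ_{j∈Γ(i)} g_{ij}(α_j) ≤ 1, or Σ_{j∈Γ(i)} g_{ij}(α_j − b) = 1. -/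
open Finset Filter Topology

noncomputable section

variable {I J : Type*} [Fintype I] [Fintype J]

theorem beta_step_well_defined
    (adj : I → J → Prop) (s : I → ℝ) (d p V : J → ℝ)
    (hs : ∀ i, 0 < s i) (hd : ∀ j, 0 < d j) (hp : ∀ j, 0 < p j) (hV : ∀ j, 0 < V j)
    (hS : ∀ j, 0 < Stot adj s j)
    (α : J → ℝ) (i : I) :
    ∃! b : ℝ, BetaSpec adj s d V α i b := by
  have hθ : ∀ j, 0 < theta adj s d j := fun j => div_pos (hd j) (hS j)
  obtain ⟨F, hF⟩ : ∃ F : ℝ → ℝ, F = fun b => ∑ j ∈ GammaS adj i, gfun adj s d V j (α j - b) :=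
    ⟨_, rfl⟩
  have hF0 : ∑ j ∈ GammaS adj i, gfun adj s d V j (α j) = F 0 := by simp [hF]
  have hcont : Continuous F := by
    rw [hF]
    unfold gfun
    fun_prop
  have hlin : ∀ j (a b : ℝ), a < b → theta adj s d j * (1 + (α j - b) / V j)
      < theta adj s d j * (1 + (α j - a) / V j) := by
    intro j a b hab
    apply mul_lt_mul_of_pos_left _ (hθ j)
    have := div_lt_div_of_pos_right (sub_lt_sub_left hab (α j)) (hV j)
    linarith
  have hstrict : ∀ a b : ℝ, a < b → F b = 1 → F b < F a := by
    intro a b hab hb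
    simp only [hF] at hb ⊢
    have hex : ∃ j ∈ GammaS adj i, 0 < gfun adj s d V j (α j - b) := by
      by_contra! h
      have := Finset.sum_nonpos h
      linarith
    obtain ⟨j, hj, hjpos⟩ := hex
    refine Finset.sum_lt_sum (fun k _ => max_le_max le_rfl (hlin k a b hab).le) ⟨j, hj, ?_⟩
    unfold gfun at hjpos ⊢
    have h1 : 0 < theta adj s d j * (1 + (α j - b) / V j) := by
      rcases lt_max_iff.1 hjpos with h | h
      · exact absurd h (lt_irrefl _)
      · exact h
    rw [max_eq_right h1.le]
    exact lt_of_lt_of_le (hlin j a b hab) (le_max_right _ _)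
  have hzero : ∃ B : ℝ, 0 ≤ B ∧ F B = 0 := by
    refine ⟨∑ j, max 0 (α j + V j), Finset.sum_nonneg fun j _ => le_max_left _ _, ?_⟩
    simp only [hF]
    refine Finset.sum_eq_zero fun j _ => ?_
    unfold gfun
    apply max_eq_left
    apply mul_nonpos_of_nonneg_of_nonpos (hθ j).le
    have h1 : max 0 (α j + V j) ≤ ∑ j, max 0 (α j + V j) :=
      Finset.single_le_sum (f := fun j => max 0 (α j + V j))
        (fun j _ => le_max_left _ _) (Finset.mem_univ j)
    have h2 := le_max_right 0 (α j + V j)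
    have h3 : (α j - ∑ j, max 0 (α j + V j)) / V j ≤ -1 := by
      rw [div_le_iff₀ (hV j)]
      linarith
    linarith
  have hspec : ∀ b, BetaSpec adj s d V α i b ↔ 0 ≤ b ∧ ((b = 0 ∧ F 0 ≤ 1) ∨ F b = 1) := by
    intro b
    unfold BetaSpec
    rw [hF0, hF]
  simp only [hspec]
  refine existsUnique_of_exists_of_unique ?_ ?_
  · by_cases h : F 0 ≤ 1
    · exact ⟨0, le_rfl, Or.inl ⟨rfl, h⟩⟩
    · obtain ⟨B, hB, hFB⟩ := hzero
      obtain ⟨b, hb, hb1⟩ := intermediate_value_Icc' hB hcont.continuousOn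
        (show (1 : ℝ) ∈ Set.Icc (F B) (F 0) from ⟨by linarith, by linarith⟩)
      exact ⟨b, hb.1, Or.inr hb1⟩
  · have key : ∀ a b : ℝ, 0 ≤ a → ((a = 0 ∧ F 0 ≤ 1) ∨ F a = 1) →
        ((b = 0 ∧ F 0 ≤ 1) ∨ F b = 1) → ¬ a < b := by
      intro a b ha h1 h2 hab
      rcases h2 with ⟨hb, _⟩ | hb
      · linarith
      · have h3 := hstrict a b hab hb
        rcases h1 with ⟨rfl, h⟩ | h <;> linarith
    rintro a b ⟨ha, h1⟩ ⟨hb, h2⟩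
    exact le_antisymm (not_lt.1 (key b a hb h2 h1)) (not_lt.1 (key a b ha h1 h2))

end
end

section
/- Well-definedness of the demand-dual step: for any β : I → ℝ and any contract j ∈ J (note Γ(j) ≠ ∅ since S_j > 0), there exists a unique a ∈ ℝ such that Σ_{i∈Γ(j)} s_i·g_{ij}(a − β_i) = d_j. -/
open Finset Filter Topology

noncomputable section

variable {I J : Type*} [Fintype I] [Fintype J]

theorem alpha_step_well_defined
    (adj : I → J → Prop) (s : I → ℝ) (d p V : J → ℝ)
    (hs : ∀ i, 0 < s i) (hd : ∀ j, 0 < d j) (hp : ∀ j, 0 < p j) (hV : ∀ j, 0 < V j)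
    (hS : ∀ j, 0 < Stot adj s j)
    (β : I → ℝ) (j : J) :
    ∃! a : ℝ, ∑ i ∈ GammaD adj j, s i * gfun adj s d V j (a - β i) = d j := by
  have hθ : 0 < theta adj s d j := div_pos (hd j) (hS j)
  have hVj := hV j
  have hmono : ∀ x y : ℝ, x ≤ y → gfun adj s d V j x ≤ gfun adj s d V j y := by
    intro x y hxy
    unfold gfun
    gcongr
  have hzero : gfun adj s d V j 0 = theta adj s d j := by
    unfold gfun
    simp [hθ.le]
  have hsum : ∑ i ∈ GammaD adj j, s i * theta adj s d j = d j := by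
    rw [← Finset.sum_mul]
    exact mul_div_cancel₀ _ (hS j).ne'
  have hlt : ∀ x y : ℝ, x < y →
      ∑ i ∈ GammaD adj j, s i * gfun adj s d V j (x - β i) = d j →
      d j < ∑ i ∈ GammaD adj j, s i * gfun adj s d V j (y - β i) := by
    intro x y hxy hx
    have hpos : ∃ i ∈ GammaD adj j, 0 < s i * gfun adj s d V j (x - β i) := by
      by_contra! hcon
      have := Finset.sum_nonpos hcon
      linarith [hd j]
    obtain ⟨i, hi, hgi⟩ := hpos
    rw [← hx]
    refine Finset.sum_lt_sum (fun k _ => ?_) ⟨i, hi, ?_⟩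
    · exact mul_le_mul_of_nonneg_left (hmono _ _ (by linarith)) (hs k).le
    · refine mul_lt_mul_of_pos_left ?_ (hs i)
      have hg : 0 < gfun adj s d V j (x - β i) := pos_of_mul_pos_right hgi (hs i).le
      unfold gfun at hg ⊢
      have h1 : 0 < theta adj s d j * (1 + (x - β i) / V j) := by
        rcases lt_max_iff.mp hg with h | h
        · exact absurd h (lt_irrefl _)
        · exact h
      rw [max_eq_right h1.le]
      refine lt_max_of_lt_right ?_
      gcongr
  have hcont : Continuous
      (fun a : ℝ => ∑ i ∈ GammaD adj j, s i * gfun adj s d V j (a - β i)) := by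
    unfold gfun
    fun_prop
  have hB : ∀ i, |β i| ≤ ∑ k, |β k| := fun i =>
    Finset.single_le_sum (f := fun k => |β k|) (fun k _ => abs_nonneg _) (Finset.mem_univ i)
  obtain ⟨a, ha⟩ := mem_range_of_exists_le_of_exists_ge (c := d j) hcont
    ⟨-∑ k, |β k|, by
      rw [← hsum]
      refine Finset.sum_le_sum fun i _ => mul_le_mul_of_nonneg_left ?_ (hs i).le
      rw [← hzero]
      exact hmono _ _ (by linarith [hB i, neg_abs_le (β i)])⟩
    ⟨∑ k, |β k|, by
      rw [← hsum]
      refine Finset.sum_le_sum fun i _ => mul_le_mul_of_nonneg_left ?_ (hs i).le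
      rw [← hzero]
      exact hmono _ _ (by linarith [hB i, le_abs_self (β i)])⟩
  refine ⟨a, ha, fun b hb => ?_⟩
  rcases lt_trichotomy b a with h | h | h
  · exact absurd ha (hlt b a h hb).ne'
  · exact h
  · exact absurd hb (hlt a b h ha).ne'

end
end

section
/- Monotonicity of the supply dual in the demand duals: let α, α′ : J → ℝ with α_j ≤ α′_j for all j, fix an impression i, and let b (respectively b′) be the unique value ≥ 0 such that either it equals 0 and Σ_{j∈Γ(i)} g_{ij}(α_j) ≤ 1 (resp. Σ_{j∈Γ(i)} g_{ij}(α′_j) ≤ 1), or Σ_{j∈Γ(i)} g_{ij}(α_j − b) = 1 (resp. Σ_{j∈Γ(i)} g_{ij}(α′_j − b′) = 1). Then b ≤ b′. -/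
open Finset Filter Topology

noncomputable section

variable {I J : Type*} [Fintype I] [Fintype J]

theorem beta_monotone_in_alpha
    (adj : I → J → Prop) (s : I → ℝ) (d p V : J → ℝ)
    (hs : ∀ i, 0 < s i) (hd : ∀ j, 0 < d j) (hp : ∀ j, 0 < p j) (hV : ∀ j, 0 < V j)
    (hS : ∀ j, 0 < Stot adj s j)
    (α α' : J → ℝ) (hle : ∀ j, α j ≤ α' j) (i : I) (b b' : ℝ)
    (hb : BetaSpec adj s d V α i b) (hb' : BetaSpec adj s d V α' i b') :
    b ≤ b' := by
  by_contra hlt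
  push Not at hlt
  obtain ⟨hb0, hb1⟩ := hb
  obtain ⟨hb0', hb1'⟩ := hb'
  have hθ : ∀ j, 0 < theta adj s d j := fun j => div_pos (hd j) (hS j)
  have h1 : ∑ j ∈ GammaS adj i, gfun adj s d V j (α j - b) = 1 := by
    rcases hb1 with ⟨h, _⟩ | h
    · linarith
    · exact h
  have h2 : ∑ j ∈ GammaS adj i, gfun adj s d V j (α' j - b') ≤ 1 := by
    rcases hb1' with ⟨h, h'⟩ | h
    · simpa [h] using h'
    · exact h.le
  have hz : ∀ j, theta adj s d j * (1 + (α j - b) / V j)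
      < theta adj s d j * (1 + (α' j - b') / V j) := by
    intro j
    have h3 : (α j - b) / V j < (α' j - b') / V j :=
      div_lt_div_of_pos_right (by linarith [hle j]) (hV j)
    exact mul_lt_mul_of_pos_left (by linarith) (hθ j)
  have hex : ∃ j ∈ GammaS adj i, 0 < gfun adj s d V j (α j - b) := by
    by_contra hne
    push Not at hne
    have := Finset.sum_nonpos hne
    linarith
  obtain ⟨j, hj, hjpos⟩ := hex
  have h4 : ∑ j ∈ GammaS adj i, gfun adj s d V j (α j - b)
      < ∑ j ∈ GammaS adj i, gfun adj s d V j (α' j - b') := by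
    refine Finset.sum_lt_sum (fun k _ => max_le_max le_rfl (hz k).le) ⟨j, hj, ?_⟩
    unfold gfun at hjpos ⊢
    have h5 : 0 < theta adj s d j * (1 + (α j - b) / V j) := by
      rcases lt_max_iff.1 hjpos with h | h
      · exact absurd h (lt_irrefl _)
      · exact h
    rw [max_eq_right h5.le]
    exact lt_max_of_lt_right (hz j)
  linarith

end
end

section
/- KKT sufficiency for the allocation problem: suppose α : J → ℝ and β : I → ℝ satisfy (i) 0 ≤ α_j ≤ p_j for all j; (ii) β_i ≥ 0 and Σ_{j∈Γ(i)} g_{ij}(α_j − β_i) ≤ 1 for all i, with equality whenever β_i > 0; (iii) Σ_{i∈Γ(j)} s_i·g_{ij}(α_j − β_i) ≤ d_j for all j, with equality whenever α_j < p_j. Define x_{ij} = g_{ij}(α_j − β_i) for i ∈ Γ(j) and u_j = d_j − Σ_{i∈Γ(j)} s_i·x_{ij}. Then (x,u) is feasible for the allocation problem and F(x,u) ≤ F(x′,u′) for every feasible (x′,u′). -/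
open Finset Filter Topology

noncomputable section

variable {I J : Type*} [Fintype I] [Fintype J]

lemma kkt_pointwise (t V z y X : ℝ) (ht : 0 < t) (hV : 0 < V) (hy : 0 ≤ y)
    (hX : X = max 0 (t * (1 + z / V))) :
    V / t * (X - t) ^ 2 + 2 * (z * (y - X)) ≤ V / t * (y - t) ^ 2 := by
  have hc : 0 < V / t := div_pos hV ht
  have hct : V / t * t = V := div_mul_cancel₀ _ ht.ne'
  have key : z * (y - X) ≤ V / t * (X - t) * (y - X) := by
    rcases le_total (t * (1 + z / V)) 0 with h | h
    · rw [max_eq_left h] at hX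
      subst hX
      have h1 : 1 + z / V ≤ 0 := by
        by_contra hh
        push Not at hh
        nlinarith [mul_pos ht hh]
      have h2 : z / V * V = z := div_mul_cancel₀ _ hV.ne'
      have h3 : z ≤ -V := by nlinarith
      have h4 : V / t * (0 - t) = -V := by linarith
      rw [h4]
      nlinarith
    · rw [max_eq_right h] at hX
      have h4 : V / t * (X - t) = z := by
        rw [hX]; field_simp; ring
      rw [h4]
  nlinarith [mul_nonneg hc.le (sq_nonneg (y - X))]

theorem kkt_sufficiency
    (adj : I → J → Prop) (s : I → ℝ) (d p V : J → ℝ)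
    (hs : ∀ i, 0 < s i) (hd : ∀ j, 0 < d j) (hp : ∀ j, 0 < p j) (hV : ∀ j, 0 < V j)
    (hS : ∀ j, 0 < Stot adj s j)
    (α : J → ℝ) (β : I → ℝ) (hkkt : KKT adj s d p V α β)
    (x : I → J → ℝ) (u : J → ℝ)
    (hx : ∀ i j, adj i j → x i j = gfun adj s d V j (α j - β i))
    (hu : ∀ j, u j = d j - ∑ i ∈ GammaD adj j, s i * gfun adj s d V j (α j - β i)) :
    Feasible adj s d x u ∧
      ∀ x' u', Feasible adj s d x' u' →
        Fobj adj s d p V x u ≤ Fobj adj s d p V x' u' := by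
  classical
  obtain ⟨ha, hb, hc⟩ := hkkt
  have hxD : ∀ j, ∑ i ∈ GammaD adj j, s i * x i j = d j - u j := by
    intro j
    rw [hu j, sub_sub_cancel]
    refine Finset.sum_congr rfl fun i hi => ?_
    rw [hx i j (by simpa [GammaD] using hi)]
  have hxS : ∀ i, ∑ j ∈ GammaS adj i, x i j
      = ∑ j ∈ GammaS adj i, gfun adj s d V j (α j - β i) := by
    intro i
    refine Finset.sum_congr rfl fun j hj => ?_
    rw [hx i j (by simpa [GammaS] using hj)]
  refine ⟨⟨fun j => ?_, fun i => ?_, fun i j h => ?_, fun j => ?_⟩, ?_⟩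
  · rw [hxD j]; linarith
  · rw [hxS i]; exact (hb i).2.1
  · rw [hx i j h]; exact le_max_left _ _
  · rw [hu j]; linarith [(hc j).1]
  rintro x' u' ⟨h1, h2, h3, h4⟩
  have hpt : ∀ j, ∀ i ∈ GammaD adj j,
      s i * (V j / theta adj s d j) * (x i j - theta adj s d j) ^ 2
        + 2 * (s i * ((α j - β i) * (x' i j - x i j)))
      ≤ s i * (V j / theta adj s d j) * (x' i j - theta adj s d j) ^ 2 := by
    intro j i hi
    have hij : adj i j := by simpa [GammaD] using hi
    have := kkt_pointwise (theta adj s d j) (V j) (α j - β i) (x' i j) (x i j)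
      (div_pos (hd j) (hS j)) (hV j) (h3 i j hij) (hx i j hij)
    have := mul_le_mul_of_nonneg_left this (hs i).le
    linarith
  have hsum := Finset.sum_le_sum fun j (_ : j ∈ (Finset.univ : Finset J)) =>
    Finset.sum_le_sum (hpt j)
  simp only [Finset.sum_add_distrib, ← Finset.mul_sum] at hsum
  have hsplit : ∑ j, ∑ i ∈ GammaD adj j, s i * ((α j - β i) * (x' i j - x i j))
      = ∑ j, α j * (∑ i ∈ GammaD adj j, s i * x' i j - ∑ i ∈ GammaD adj j, s i * x i j)
        - ∑ i, s i * (β i * (∑ j ∈ GammaS adj i, x' i j - ∑ j ∈ GammaS adj i, x i j)) := by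
    have e : ∑ i, s i * (β i * (∑ j ∈ GammaS adj i, x' i j - ∑ j ∈ GammaS adj i, x i j))
        = ∑ j, ∑ i ∈ GammaD adj j, s i * (β i * (x' i j - x i j)) := by
      simp only [← Finset.sum_sub_distrib, Finset.mul_sum]
      refine Finset.sum_comm' ?_
      simp [GammaD, GammaS]
    rw [e, ← Finset.sum_sub_distrib]
    refine Finset.sum_congr rfl fun j _ => ?_
    rw [← Finset.sum_sub_distrib, Finset.mul_sum, ← Finset.sum_sub_distrib]
    refine Finset.sum_congr rfl fun i _ => ?_
    ring
  have hB : ∑ i, s i * (β i * (∑ j ∈ GammaS adj i, x' i j - ∑ j ∈ GammaS adj i, x i j)) ≤ 0 := by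
    refine Finset.sum_nonpos fun i _ => ?_
    refine mul_nonpos_of_nonneg_of_nonpos (hs i).le ?_
    rcases (hb i).1.eq_or_lt with h | h
    · rw [← h]; simp
    · rw [hxS i, (hb i).2.2 h]
      exact mul_nonpos_of_nonneg_of_nonpos h.le (by linarith [h2 i])
  have hA : ∑ j, p j * u j ≤ ∑ j, α j * (∑ i ∈ GammaD adj j, s i * x' i j
      - ∑ i ∈ GammaD adj j, s i * x i j) + ∑ j, p j * u' j := by
    rw [← Finset.sum_add_distrib]
    refine Finset.sum_le_sum fun j _ => ?_
    have hz : (p j - α j) * u j = 0 := by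
      rcases (ha j).2.eq_or_lt with h | h
      · rw [h]; ring
      · rw [hu j, (hc j).2 h]; ring
    rw [hxD j]
    have q1 := mul_le_mul_of_nonneg_left (h1 j) (ha j).1
    have q2 := mul_nonneg (sub_nonneg.2 (ha j).2) (h4 j)
    nlinarith
  unfold Fobj
  linarith
end
end

section
/- Uniqueness of the optimal allocation: if (x,u) and (x′,u′) are both feasible for the allocation problem and both minimize F over the feasible set, then x_{ij} = x′_{ij} for every arc i ∈ Γ(j). -/
open Finset Filter Topology

noncomputable section

variable {I J : Type*} [Fintype I] [Fintype J]

theorem optimal_allocation_unique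
    (adj : I → J → Prop) (s : I → ℝ) (d p V : J → ℝ)
    (hs : ∀ i, 0 < s i) (hd : ∀ j, 0 < d j) (hp : ∀ j, 0 < p j) (hV : ∀ j, 0 < V j)
    (hS : ∀ j, 0 < Stot adj s j)
    (x x' : I → J → ℝ) (u u' : J → ℝ)
    (hfeas : Feasible adj s d x u) (hfeas' : Feasible adj s d x' u')
    (hmin : ∀ y v, Feasible adj s d y v → Fobj adj s d p V x u ≤ Fobj adj s d p V y v)
    (hmin' : ∀ y v, Feasible adj s d y v → Fobj adj s d p V x' u' ≤ Fobj adj s d p V y v) :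
    ∀ i j, adj i j → x i j = x' i j := by
  intro i₀ j₀ hadj
  have hw : ∀ i j, 0 < s i * (V j / theta adj s d j) := fun i j =>
    mul_pos (hs i) (div_pos (hV j) (div_pos (hd j) (hS j)))
  obtain ⟨h1, h2, h3, h4⟩ := hfeas
  obtain ⟨h1', h2', h3', h4'⟩ := hfeas'
  have hy : Feasible adj s d (fun i j => (1 / 2) * x i j + (1 / 2) * x' i j)
      (fun j => (1 / 2) * u j + (1 / 2) * u' j) := by
    refine ⟨fun j => ?_, fun i => ?_, fun i j h => ?_, fun j => ?_⟩
    · have e : ∑ i ∈ GammaD adj j, s i * ((1 / 2) * x i j + (1 / 2) * x' i j)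
          = (1 / 2) * ∑ i ∈ GammaD adj j, s i * x i j
            + (1 / 2) * ∑ i ∈ GammaD adj j, s i * x' i j := by
        rw [Finset.mul_sum, Finset.mul_sum, ← Finset.sum_add_distrib]
        exact Finset.sum_congr rfl fun i _ => by ring
      have a := h1 j
      have b := h1' j
      simp only [e]
      linarith
    · have a := h2 i
      have b := h2' i
      simp only [Finset.sum_add_distrib, ← Finset.mul_sum]
      linarith
    · have a := h3 i j h
      have b := h3' i j h
      dsimp only
      linarith
    · have a := h4 j
      have b := h4' j
      dsimp only
      linarith
  have key : Fobj adj s d p V x u + Fobj adj s d p V x' u'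
      - 2 * Fobj adj s d p V (fun i j => (1 / 2) * x i j + (1 / 2) * x' i j)
        (fun j => (1 / 2) * u j + (1 / 2) * u' j)
      = ∑ j, ∑ i ∈ GammaD adj j,
        (1 / 4) * (s i * (V j / theta adj s d j) * (x i j - x' i j) ^ 2) := by
    unfold Fobj
    simp only [mul_add, Finset.mul_sum, ← Finset.sum_add_distrib, ← Finset.sum_sub_distrib]
    refine Finset.sum_congr rfl fun j _ => ?_
    have e2 : ∀ A B C P Q R T : ℝ, P + Q = R → A + B - C = T →
      A + P + (B + Q) - (C + R) = T := by intros; linarith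
    apply e2
    · ring
    · simp only [← Finset.sum_add_distrib, ← Finset.sum_sub_distrib]
      exact Finset.sum_congr rfl fun i _ => by ring
  have hle := hmin _ _ hy
  have hle' := hmin' _ _ hy
  have hn : ∀ i j, 0 ≤ (1 / 4) * (s i * (V j / theta adj s d j) * (x i j - x' i j) ^ 2) :=
    fun i j => mul_nonneg (by norm_num) (mul_nonneg (hw i j).le (sq_nonneg _))
  have hi : i₀ ∈ GammaD adj j₀ := by simp [GammaD, hadj]
  have l1 := Finset.single_le_sum (f := fun i =>
    (1 / 4) * (s i * (V j₀ / theta adj s d j₀) * (x i j₀ - x' i j₀) ^ 2))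
    (fun i _ => hn i j₀) hi
  have l2 := Finset.single_le_sum (f := fun j => ∑ i ∈ GammaD adj j,
    (1 / 4) * (s i * (V j / theta adj s d j) * (x i j - x' i j) ^ 2))
    (fun j _ => Finset.sum_nonneg fun i _ => hn i j) (Finset.mem_univ j₀)
  have hz : s i₀ * (V j₀ / theta adj s d j₀) * (x i₀ j₀ - x' i₀ j₀) ^ 2 ≤ 0 := by linarith
  have hsq : (x i₀ j₀ - x' i₀ j₀) ^ 2 = 0 :=
    le_antisymm (nonpos_of_mul_nonpos_right hz (hw i₀ j₀)) (sq_nonneg _)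
  exact sub_eq_zero.mp (pow_eq_zero_iff (two_ne_zero) |>.mp hsq)

end
end

section
/- Online reconstruction of optimal supply duals from demand duals alone: suppose α : J → ℝ and β* : I → ℝ satisfy (i) 0 ≤ α_j ≤ p_j for all j; (ii) β*_i ≥ 0 and Σ_{j∈Γ(i)} g_{ij}(α_j − β*_i) ≤ 1 for all i, with equality whenever β*_i > 0; (iii) Σ_{i∈Γ(j)} s_i·g_{ij}(α_j − β*_i) ≤ d_j for all j, with equality whenever α_j < p_j. Then for every impression i, β*_i is the unique b ≥ 0 such that either b = 0 and Σ_{j∈Γ(i)} g_{ij}(α_j) ≤ 1, or Σ_{j∈Γ(i)} g_{ij}(α_j − b) = 1; hence the per-impression computation of b from α alone recovers the allocation x_{ij} = g_{ij}(α_j − β*_i). -/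
open Finset Filter Topology

noncomputable section

variable {I J : Type*} [Fintype I] [Fintype J]

/-- If the total is `1` at `c`, it exceeds `1` at every `b < c`. -/
theorem sum_gfun_gt_one
    (adj : I → J → Prop) (s : I → ℝ) (d V : J → ℝ)
    (hd : ∀ j, 0 < d j) (hV : ∀ j, 0 < V j) (hS : ∀ j, 0 < Stot adj s j)
    (α : J → ℝ) (i : I) (b c : ℝ) (hbc : b < c)
    (hc : ∑ j ∈ GammaS adj i, gfun adj s d V j (α j - c) = 1) :
    1 < ∑ j ∈ GammaS adj i, gfun adj s d V j (α j - b) := by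
  have hlin : ∀ j, theta adj s d j * (1 + (α j - c) / V j)
      < theta adj s d j * (1 + (α j - b) / V j) := by
    intro j
    have ht : 0 < theta adj s d j := div_pos (hd j) (hS j)
    have h1 : (α j - c) / V j < (α j - b) / V j :=
      div_lt_div_of_pos_right (by linarith) (hV j)
    exact mul_lt_mul_of_pos_left (by linarith) ht
  have hpos : ∃ j ∈ GammaS adj i, 0 < gfun adj s d V j (α j - c) := by
    by_contra! hcon
    have := Finset.sum_nonpos hcon
    linarith
  obtain ⟨j, hj, hjpos⟩ := hpos
  rw [← hc]
  refine Finset.sum_lt_sum (fun k _ => max_le_max le_rfl (hlin k).le) ⟨j, hj, ?_⟩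
  have h2 : 0 < theta adj s d j * (1 + (α j - c) / V j) := by
    rcases lt_max_iff.mp hjpos with h | h
    · exact absurd h (lt_irrefl _)
    · exact h
  unfold gfun
  rw [max_eq_right h2.le]
  exact lt_max_of_lt_right (hlin j)

theorem online_beta_reconstruction
    (adj : I → J → Prop) (s : I → ℝ) (d p V : J → ℝ)
    (hs : ∀ i, 0 < s i) (hd : ∀ j, 0 < d j) (hp : ∀ j, 0 < p j) (hV : ∀ j, 0 < V j)
    (hS : ∀ j, 0 < Stot adj s j)
    (α : J → ℝ) (βs : I → ℝ) (hkkt : KKT adj s d p V α βs) :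
    ∀ i b, BetaSpec adj s d V α i b ↔ b = βs i := by
  intro i b
  obtain ⟨h0, hle, heq⟩ := hkkt.2.1 i
  have key := sum_gfun_gt_one adj s d V hd hV hS α i
  constructor
  · rintro ⟨hb, ⟨rfl, hsum⟩ | hsum⟩
    · rcases h0.lt_or_eq with h | h
      · have := key 0 (βs i) h (heq h)
        simp only [sub_zero] at this
        linarith
      · exact h
    · rcases lt_trichotomy b (βs i) with h | h | h
      · have := key b (βs i) h (heq (lt_of_le_of_lt hb h))
        linarith
      · exact h
      · have := key (βs i) b h hsum
        linarith
  · rintro rfl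
    refine ⟨h0, ?_⟩
    rcases h0.lt_or_eq with h | h
    · exact Or.inr (heq h)
    · left
      refine ⟨h.symm, ?_⟩
      rw [← h] at hle
      simpa only [sub_zero] using hle

end
end
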